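/- arXiv:1204.2445 — 2 statements merged into one kernel-verified Lean document; each statement's English description precedes it below -/
import Mathlib

section
/- Let p be a positive integer. If a function f : E → ℝ is p-quasi-Cauchy continuous on a p-quasi-Cauchy compact subset E of ℝ, then f is uniformly continuous on E. -/
open Filter Topology

/-- A real sequence `x` is `p`-quasi-Cauchy if `x (n + p) - x n → 0`. -/
def PQuasiCauchy (p : ℕ) (x : ℕ → ℝ) : Prop :=
  Tendsto (fun n => x (n + p) - x n) atTop (𝓝 0)

/-- A subset `E` of `ℝ` is `p`-quasi-Cauchy compact if every sequence of points in `E`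
has a `p`-quasi-Cauchy subsequence. -/
def PQuasiCauchyCompact (p : ℕ) (E : Set ℝ) : Prop :=
  ∀ x : ℕ → ℝ, (∀ n, x n ∈ E) → ∃ k : ℕ → ℕ, StrictMono k ∧ PQuasiCauchy p (x ∘ k)

/-- A function `f` is `p`-quasi-Cauchy continuous on `E` if it maps `p`-quasi-Cauchy
sequences of points in `E` to `p`-quasi-Cauchy sequences. -/
def PQuasiCauchyContinuousOn (p : ℕ) (f : ℝ → ℝ) (E : Set ℝ) : Prop :=
  ∀ x : ℕ → ℝ, (∀ n, x n ∈ E) → PQuasiCauchy p x → PQuasiCauchy p (fun n => f (x n))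

open scoped Uniformity

/-!
Repeating every term of a sequence `r` times turns step `q` into step `q * r`, and keeping every
`r`-th term turns it back, so both hypotheses for `p` imply those for step `1`. Given points
`a n, b n ∈ E` that get arbitrarily close, pass to a subsequence along which `a` is quasi-Cauchy
with step `1`. Then `a 0, b 0, a 1, b 1, …` is quasi-Cauchy with step `1` as well, hence so is its
image under `f`, which says in particular that `f (a n)` and `f (b n)` get arbitrarily close.
-/

section

variable {α β : Type*}

/-- The sequence `a 0, b 0, a 1, b 1, …`, used to turn closeness of two sequences into
closeness of consecutive terms of a single one. -/
def interleave (a b : ℕ → α) (n : ℕ) : α :=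
  if Even n then a (n / 2) else b (n / 2)

theorem interleave_two_mul (a b : ℕ → α) (n : ℕ) : interleave a b (2 * n) = a n := by
  simp [interleave]

theorem interleave_two_mul_add_one (a b : ℕ → α) (n : ℕ) :
    interleave a b (2 * n + 1) = b n := by
  have hdiv : (2 * n + 1) / 2 = n := by lia
  simp [interleave, hdiv]

theorem interleave_mem {s : Set α} {a b : ℕ → α} (ha : ∀ n, a n ∈ s) (hb : ∀ n, b n ∈ s)
    (n : ℕ) : interleave a b n ∈ s := by
  unfold interleave
  split_ifs
  exacts [ha _, hb _]

theorem tendsto_atTop_of_even_of_odd {u : ℕ → α} {l : Filter α}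
    (heven : Tendsto (fun n => u (2 * n)) atTop l)
    (hodd : Tendsto (fun n => u (2 * n + 1)) atTop l) : Tendsto u atTop l := by
  have hdiv : Tendsto (fun n => n / 2) atTop atTop := Nat.tendsto_div_const_atTop two_ne_zero
  refine ((heven.comp hdiv).if' (p := Even) (hodd.comp hdiv)).congr fun n => ?_
  split_ifs with hn
  · exact congrArg u (Nat.two_mul_div_two_of_even hn)
  · exact congrArg u (Nat.two_mul_div_two_add_one_of_odd (Nat.not_even_iff_odd.1 hn))

variable [UniformSpace α] [UniformSpace β]

/-- The `p`-quasi-Cauchy sequences of a uniform space: closeness of `x n` and `x (n + p)` is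
measured by entourages, which for real sequences recovers `PQuasiCauchy`. -/
def QuasiCauchySeq (p : ℕ) (x : ℕ → α) : Prop :=
  Tendsto (fun n => (x n, x (n + p))) atTop (𝓤 α)

/-- `p`-quasi-Cauchy compactness of a subset of a uniform space, which on `ℝ` is
`PQuasiCauchyCompact`. -/
def QuasiCauchyCompact (p : ℕ) (E : Set α) : Prop :=
  ∀ x : ℕ → α, (∀ n, x n ∈ E) → ∃ k : ℕ → ℕ, StrictMono k ∧ QuasiCauchySeq p (x ∘ k)

/-- `p`-quasi-Cauchy continuity of a map between uniform spaces, which on `ℝ` is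
`PQuasiCauchyContinuousOn`. -/
def QuasiCauchyContinuousOn (p : ℕ) (f : α → β) (E : Set α) : Prop :=
  ∀ x : ℕ → α, (∀ n, x n ∈ E) → QuasiCauchySeq p x → QuasiCauchySeq p (fun n => f (x n))

theorem pQuasiCauchy_iff_quasiCauchySeq {p : ℕ} {x : ℕ → ℝ} :
    PQuasiCauchy p x ↔ QuasiCauchySeq p x := by
  rw [PQuasiCauchy, QuasiCauchySeq, uniformity_eq_comap_nhds_zero ℝ, tendsto_comap_iff]
  rfl

theorem pQuasiCauchyCompact_iff_quasiCauchyCompact {p : ℕ} {E : Set ℝ} :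
    PQuasiCauchyCompact p E ↔ QuasiCauchyCompact p E := by
  simp only [PQuasiCauchyCompact, QuasiCauchyCompact, pQuasiCauchy_iff_quasiCauchySeq]

theorem pQuasiCauchyContinuousOn_iff_quasiCauchyContinuousOn {p : ℕ} {f : ℝ → ℝ} {E : Set ℝ} :
    PQuasiCauchyContinuousOn p f E ↔ QuasiCauchyContinuousOn p f E := by
  simp only [PQuasiCauchyContinuousOn, QuasiCauchyContinuousOn, pQuasiCauchy_iff_quasiCauchySeq]

theorem QuasiCauchySeq.comp_mul_right {q r : ℕ} {x : ℕ → α} (hx : QuasiCauchySeq (q * r) x)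
    (hr : 0 < r) : QuasiCauchySeq q (fun n => x (n * r)) := by
  simpa only [QuasiCauchySeq, Function.comp_def, id, add_mul] using
    Tendsto.comp hx (tendsto_id.atTop_mul_const' hr)

theorem QuasiCauchySeq.comp_div {q r : ℕ} {x : ℕ → α} (hx : QuasiCauchySeq q x) (hr : 0 < r) :
    QuasiCauchySeq (q * r) (fun n => x (n / r)) := by
  simpa only [QuasiCauchySeq, Function.comp_def, Nat.add_mul_div_right _ _ hr] using
    Tendsto.comp hx (Nat.tendsto_div_const_atTop hr.ne')

theorem QuasiCauchySeq.interleave {a b : ℕ → α} (ha : QuasiCauchySeq 1 a)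
    (hab : Tendsto (fun n => (a n, b n)) atTop (𝓤 α)) :
    QuasiCauchySeq 1 (interleave a b) := by
  apply tendsto_atTop_of_even_of_odd
  · simpa only [interleave_two_mul, interleave_two_mul_add_one] using hab
  · have hba : Tendsto (fun n => (b n, a (n + 1))) atTop (𝓤 α) :=
      hab.uniformity_symm.uniformity_trans ha
    have hsucc (n : ℕ) : 2 * n + 1 + 1 = 2 * (n + 1) := by ring
    simpa only [hsucc, interleave_two_mul, interleave_two_mul_add_one] using hba

theorem QuasiCauchyCompact.of_dvd {p q : ℕ} {E : Set α} (hE : QuasiCauchyCompact p E)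
    (hp : 0 < p) (hqp : q ∣ p) : QuasiCauchyCompact q E := by
  obtain ⟨r, rfl⟩ := hqp
  have hr : 0 < r := Nat.pos_of_mul_pos_left hp
  intro x hxE
  obtain ⟨k, hk, hxk⟩ := hE x hxE
  exact ⟨fun n => k (n * r), hk.comp (strictMono_mul_right_of_pos hr), hxk.comp_mul_right hr⟩

theorem QuasiCauchyContinuousOn.of_dvd {p q : ℕ} {f : α → β} {E : Set α}
    (hf : QuasiCauchyContinuousOn p f E) (hp : 0 < p) (hqp : q ∣ p) :
    QuasiCauchyContinuousOn q f E := by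
  obtain ⟨r, rfl⟩ := hqp
  have hr : 0 < r := Nat.pos_of_mul_pos_left hp
  intro x hxE hx
  have hfx : QuasiCauchySeq (q * r) (fun n => f (x (n / r))) :=
    hf _ (fun n => hxE (n / r)) (hx.comp_div hr)
  simpa only [Nat.mul_div_cancel _ hr] using hfx.comp_mul_right hr

theorem QuasiCauchyContinuousOn.tendsto_uniformity {f : α → β} {E : Set α}
    (hf : QuasiCauchyContinuousOn 1 f E) {a b : ℕ → α} (haE : ∀ n, a n ∈ E) (hbE : ∀ n, b n ∈ E)
    (ha : QuasiCauchySeq 1 a) (hab : Tendsto (fun n => (a n, b n)) atTop (𝓤 α)) :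
    Tendsto (fun n => (f (a n), f (b n))) atTop (𝓤 β) := by
  have hfab : QuasiCauchySeq 1 (fun n => f (interleave a b n)) :=
    hf _ (interleave_mem haE hbE) (ha.interleave hab)
  simpa only [Function.comp_def, id, interleave_two_mul, interleave_two_mul_add_one] using
    Tendsto.comp hfab (tendsto_id.const_mul_atTop' two_pos)

theorem uniformContinuousOn_of_exists_subseq [IsCountablyGenerated (𝓤 α)] {f : α → β} {E : Set α}
    (h : ∀ a b : ℕ → α, (∀ n, a n ∈ E) → (∀ n, b n ∈ E) →
      Tendsto (fun n => (a n, b n)) atTop (𝓤 α) →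
      ∃ k : ℕ → ℕ, Tendsto (fun n => (f (a (k n)), f (b (k n)))) atTop (𝓤 β)) :
    UniformContinuousOn f E := by
  refine tendsto_of_subseq_tendsto fun x hx => ?_
  obtain ⟨hclose, hmem⟩ := tendsto_inf.1 hx
  obtain ⟨N, hN⟩ := eventually_atTop.1 (tendsto_principal.1 hmem)
  obtain ⟨k, hk⟩ := h (fun n => (x (n + N)).1) (fun n => (x (n + N)).2)
    (fun n => (hN _ (Nat.le_add_left N n)).1) (fun n => (hN _ (Nat.le_add_left N n)).2)
    (hclose.comp (tendsto_add_atTop_nat N))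
  exact ⟨fun n => k n + N, hk⟩

theorem pQuasiCauchyContinuous_on_pQuasiCauchyCompact_uniformContinuous_general
    [IsCountablyGenerated (𝓤 α)] {p : ℕ} (hp : 0 < p) {E : Set α} {f : α → β}
    (hE : QuasiCauchyCompact p E) (hf : QuasiCauchyContinuousOn p f E) :
    UniformContinuousOn f E := by
  have hE₁ : QuasiCauchyCompact 1 E := hE.of_dvd hp (one_dvd p)
  have hf₁ : QuasiCauchyContinuousOn 1 f E := hf.of_dvd hp (one_dvd p)
  refine uniformContinuousOn_of_exists_subseq fun a b haE hbE hab => ?_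
  obtain ⟨k, hk, hak⟩ := hE₁ a haE
  exact ⟨k, hf₁.tendsto_uniformity (fun n => haE (k n)) (fun n => hbE (k n)) hak
    (hab.comp hk.tendsto_atTop)⟩

end

/-- If `f` is `p`-quasi-Cauchy continuous on a `p`-quasi-Cauchy compact
subset `E` of `ℝ`, then `f` is uniformly continuous on `E`. -/
theorem pQuasiCauchyContinuous_on_pQuasiCauchyCompact_uniformContinuous
    (p : ℕ) (hp : 0 < p) (E : Set ℝ) (f : ℝ → ℝ)
    (hE : PQuasiCauchyCompact p E) (hf : PQuasiCauchyContinuousOn p f E) :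
    UniformContinuousOn f E :=
  pQuasiCauchyContinuous_on_pQuasiCauchyCompact_uniformContinuous_general hp
    (pQuasiCauchyCompact_iff_quasiCauchyCompact.1 hE)
    (pQuasiCauchyContinuousOn_iff_quasiCauchyContinuousOn.1 hf)
end

section
/- Let E be an interval of ℝ. A function f : E → ℝ is uniformly continuous on E if and only if there exists a positive integer p such that f preserves p-quasi-Cauchy sequences of points in E, i.e., (f(x_n)) is p-quasi-Cauchy whenever (x_n) is a p-quasi-Cauchy sequence of points in E. -/
open Filter Topology

/-! When the uniformity of the domain is countably generated, `f` is uniformly continuous as soon as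
it maps every sequence of pairs tending to the uniformity to another such sequence. In a
well-chained space a sequence of pairs `u k` tending to the uniformity can be threaded into one
quasi-Cauchy sequence, by joining the end of `u k` to the start of `u (k + 1)` with a chain of ever
smaller steps; so preserving `1`-quasi-Cauchy sequences suffices. For `p > 0`, repeating each term
of a `1`-quasi-Cauchy sequence `p` times makes it `p`-quasi-Cauchy. -/

open Relation Set Uniformity

section Chains

variable {α : Type*}

lemma exists_chain_of_transGen {r : α → α → Prop} {a b : α} (h : TransGen r a b) :
    ∃ m > 0, ∃ c : ℕ → α, c 0 = a ∧ c m = b ∧ ∀ i < m, r (c i) (c (i + 1)) := by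
  induction h with
  | @single b hab => exact ⟨1, one_pos, fun i => if i = 0 then a else b, by grind⟩
  | @tail b d _ hbd ih =>
    obtain ⟨m, _, c, hc⟩ := ih
    exact ⟨m + 1, m.succ_pos, fun i => if i ≤ m then c i else d, by grind⟩

lemma exists_seq_eqOn_Icc {φ : ℕ → ℕ} (hφ : StrictMono φ) {c : ℕ → ℕ → α}
    (hc : ∀ k, c k (φ (k + 1)) = c (k + 1) (φ (k + 1))) :
    ∃ x : ℕ → α, ∀ k, EqOn x (c k) (Icc (φ k) (φ (k + 1))) := by
  let κ (n : ℕ) : ℕ := Nat.findGreatest (φ · ≤ n) n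
  have hκ {k n : ℕ} (hk : φ k ≤ n) (hn : n < φ (k + 1)) : κ n = k := by
    refine Nat.findGreatest_eq_iff.2 ⟨(hφ.le_apply).trans hk, fun _ => hk, fun j hkj _ => ?_⟩
    exact (hn.trans_le (hφ.monotone hkj)).not_ge
  refine ⟨fun n => c (κ n) n, fun k n hn => ?_⟩
  rcases hn.2.lt_or_eq with hlt | rfl
  · simp only [hκ hn.1 hlt]
  · simp only [hκ le_rfl (hφ (k + 1).lt_succ_self), hc]

lemma exists_seq_of_antitone_of_forall_transGen {R : ℕ → α → α → Prop} (hR : Antitone R)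
    {s : ℕ → α} (hs : ∀ k, TransGen (R k) (s k) (s (k + 1))) :
    ∃ (x : ℕ → α) (φ : ℕ → ℕ), StrictMono φ ∧ (∀ k, x (φ k) = s k) ∧
      ∀ k, ∀ n ≥ φ k, R k (x n) (x (n + 1)) := by
  choose m hm c hc_zero hc_end hc_step using fun k => exists_chain_of_transGen (hs k)
  let φ (k : ℕ) : ℕ := ∑ i ∈ Finset.range k, m i
  have hφ_succ (k : ℕ) : φ (k + 1) = φ k + m k := Finset.sum_range_succ m k
  have hφ : StrictMono φ := strictMono_nat_of_lt_succ fun k => by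
    rw [hφ_succ]; exact Nat.lt_add_of_pos_right (hm k)
  obtain ⟨x, hx⟩ := exists_seq_eqOn_Icc hφ (c := fun k n => c k (n - φ k)) fun k => by
    simp only [hφ_succ, Nat.add_sub_cancel_left, Nat.sub_self, hc_zero, hc_end]
  refine ⟨x, φ, hφ, fun k => ?_, fun k n hn => ?_⟩
  · simp only [hx k (left_mem_Icc.2 (hφ k.lt_succ_self).le), Nat.sub_self, hc_zero]
  · obtain ⟨l, hkl, hl, hnl⟩ : ∃ l ≥ k, φ l ≤ n ∧ n < φ (l + 1) := by
      have hmem : n ∈ Ici (φ ⊥) := (hφ.monotone bot_le).trans hn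
      rw [← iUnion_Ico_map_succ_eq_Ici (fun _ => hφ.monotone bot_le)
        hφ.not_bddAbove_range_of_isSuccArchimedean, mem_iUnion] at hmem
      obtain ⟨l, hl, hnl⟩ := hmem
      exact ⟨l, Nat.lt_succ_iff.1 (hφ.lt_iff_lt.1 (hn.trans_lt hnl)), hl, hnl⟩
    have hstep := hc_step l (n - φ l) (by grind)
    rw [← Nat.sub_add_comm hl] at hstep
    rw [hx l ⟨hl, hnl.le⟩, hx l ⟨hl.trans n.le_succ, hnl⟩]
    exact hR hkl _ _ hstep

lemma transGen_edge_of_reflTransGen {V : Set (α × α)} {d e : α × α} (hd : d ∈ V)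
    (h : ReflTransGen (fun x y => (x, y) ∈ V) d.2 e.1) :
    TransGen (fun d e => d ∈ V ∧ d.2 = e.1) d e := by
  obtain ⟨a, b⟩ := d
  dsimp only at h
  induction h using ReflTransGen.head_induction_on generalizing a with
  | refl => exact .single ⟨hd, rfl⟩
  | @head b z hbz _ ih => exact .head ⟨hd, rfl⟩ (ih b hbz)

end Chains

section UniformSpace

variable {X Y : Type*} [UniformSpace X] [UniformSpace Y] {f : X → Y} {p : ℕ}

/-- A uniform space is well-chained (Cantor connected) if any two of its points are joined, for
every entourage `V`, by a finite chain with consecutive terms `V`-close. -/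
def IsWellChained (X : Type*) [UniformSpace X] : Prop :=
  ∀ V ∈ 𝓤 X, ∀ a b : X, ReflTransGen (fun x y => (x, y) ∈ V) a b

/-- The `p`-quasi-Cauchy sequences of a uniform space; see `isQuasiCauchySeq_real_iff`
for the comparison with `PQuasiCauchy`. -/
def IsQuasiCauchySeq (p : ℕ) (x : ℕ → X) : Prop :=
  Tendsto (fun n => (x n, x (n + p))) atTop (𝓤 X)

/-- The functions between uniform spaces that preserve `p`-quasi-Cauchy sequences. A function
on a subset `E` of a space is encoded as a function on the subtype `E`. -/
def PreservesQuasiCauchy (p : ℕ) (f : X → Y) : Prop :=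
  ∀ x : ℕ → X, IsQuasiCauchySeq p x → IsQuasiCauchySeq p (f ∘ x)

lemma isQuasiCauchySeq_coe_iff {E : Set X} {x : ℕ → E} :
    IsQuasiCauchySeq p (fun n => (x n : X)) ↔ IsQuasiCauchySeq p x := by
  simp only [IsQuasiCauchySeq, uniformity_subtype, tendsto_comap_iff, Function.comp_def]

lemma isWellChained_of_preconnectedSpace [PreconnectedSpace X] : IsWellChained X := by
  intro V hV
  refine PreconnectedSpace.induction₂' _ (fun a => ?_) inferInstance
  filter_upwards [mem_nhds_left a hV, mem_nhds_right a hV] with b hab hba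
  exact ⟨.single hab, .single hba⟩

lemma IsWellChained.exists_isQuasiCauchySeq_consecutive_eq [IsCountablyGenerated (𝓤 X)]
    (hX : IsWellChained X) {u : ℕ → X × X} (hu : Tendsto u atTop (𝓤 X)) :
    ∃ (x : ℕ → X) (φ : ℕ → ℕ), IsQuasiCauchySeq 1 x ∧ StrictMono φ ∧
      ∀ k, (x (φ k), x (φ k + 1)) = u k := by
  obtain ⟨V, hV⟩ := (𝓤 X).exists_antitone_basis
  let W (k : ℕ) : Set (X × X) := V k ∪ u '' Ici k
  have hW : Antitone W := fun k l hkl =>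
    union_subset_union (hV.antitone hkl) (image_mono (Ici_subset_Ici.2 hkl))
  have hW_small {U : Set (X × X)} (hU : U ∈ 𝓤 X) : ∃ k, W k ⊆ U := by
    obtain ⟨k, hk⟩ := hV.mem_iff.1 hU
    obtain ⟨N, hN⟩ := eventually_atTop.1 (hu hU)
    refine ⟨max k N, union_subset ((hV.antitone (le_max_left k N)).trans hk) ?_⟩
    exact image_subset_iff.2 fun l hl => hN l ((le_max_right k N).trans hl)
  -- Walking along edges rather than points makes each pair `u k` occur at consecutive indices.
  obtain ⟨e, φ, hφ, heφ, he⟩ := exists_seq_of_antitone_of_forall_transGen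
    (R := fun k d e => d ∈ W k ∧ d.2 = e.1) (s := u)
    (fun _ _ hkl _ _ h => ⟨hW hkl h.1, h.2⟩)
    fun k => transGen_edge_of_reflTransGen (.inr (mem_image_of_mem u self_mem_Ici))
      (hX _ (mem_of_superset (hV.mem k) subset_union_left) _ _)
  have hedge {k n : ℕ} (hn : φ k ≤ n) : ((e n).1, (e (n + 1)).1) = e n :=
    Prod.ext rfl (he k n hn).2.symm
  refine ⟨fun n => (e n).1, φ, fun U hU => ?_, hφ, fun k => (hedge le_rfl).trans (heφ k)⟩
  obtain ⟨k, hk⟩ := hW_small hU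
  refine mem_map.2 <| mem_of_superset (Ici_mem_atTop (φ k)) fun n hn => hk ?_
  simpa only [mem_preimage, hedge hn] using (he k n hn).1

namespace PreservesQuasiCauchy

lemma of_uniformContinuous (hf : UniformContinuous f) : PreservesQuasiCauchy p f :=
  fun _ hx => Tendsto.comp hf hx

lemma one_of_pos (hf : PreservesQuasiCauchy p f) (hp : 0 < p) : PreservesQuasiCauchy 1 f := by
  intro x hx
  have hrepeat : IsQuasiCauchySeq p fun n => x (n / p) := by
    simpa only [IsQuasiCauchySeq, Function.comp_def, Nat.add_div_right _ hp] using
      Tendsto.comp hx (Nat.tendsto_div_const_atTop hp.ne')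
  have hmul : Tendsto (· * p) atTop atTop := tendsto_id.atTop_mul_const' hp
  simpa only [IsQuasiCauchySeq, Function.comp_def, Nat.add_div_right _ hp,
    Nat.mul_div_cancel _ hp] using Tendsto.comp (hf _ hrepeat) hmul

lemma uniformContinuous [IsCountablyGenerated (𝓤 X)] (hX : IsWellChained X)
    (hf : PreservesQuasiCauchy 1 f) : UniformContinuous f := by
  refine tendsto_of_seq_tendsto fun u hu => ?_
  obtain ⟨x, φ, hx, hφ, hxu⟩ := hX.exists_isQuasiCauchySeq_consecutive_eq hu
  refine (Tendsto.comp (hf x hx) hφ.tendsto_atTop).congr fun k => ?_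
  simp only [Function.comp_apply, ← hxu]

end PreservesQuasiCauchy

theorem uniformContinuousOn_iff_exists_pQuasiCauchyContinuous_general
    [IsCountablyGenerated (𝓤 X)] (hX : IsWellChained X) :
    UniformContinuous f ↔ ∃ p : ℕ, 0 < p ∧ PreservesQuasiCauchy p f :=
  ⟨fun hf => ⟨1, one_pos, .of_uniformContinuous hf⟩,
    fun ⟨_, hp, hf⟩ => (hf.one_of_pos hp).uniformContinuous hX⟩

end UniformSpace

section Real

variable {p : ℕ}

lemma isQuasiCauchySeq_real_iff {x : ℕ → ℝ} : IsQuasiCauchySeq p x ↔ PQuasiCauchy p x := by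
  simp only [IsQuasiCauchySeq, PQuasiCauchy, uniformity_eq_comap_nhds_zero, tendsto_comap_iff,
    Function.comp_def]

lemma preservesQuasiCauchy_domRestrict_iff {E : Set ℝ} {f : ℝ → ℝ} :
    PreservesQuasiCauchy p (E.domRestrict f) ↔ PQuasiCauchyContinuousOn p f E := by
  simp only [PreservesQuasiCauchy, PQuasiCauchyContinuousOn, ← isQuasiCauchySeq_real_iff]
  refine ⟨fun hf x hxE hx => ?_, fun hf x hx => ?_⟩
  · exact hf (fun n => ⟨x n, hxE n⟩) (isQuasiCauchySeq_coe_iff.1 hx)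
  · exact hf _ (fun n => (x n).2) (isQuasiCauchySeq_coe_iff.2 hx)

end Real

/-- On an interval (nonempty convex subset) `E` of `ℝ`, a function `f`
is uniformly continuous iff there is a positive integer `p` such that `f` preserves
`p`-quasi-Cauchy sequences of points in `E`. -/
theorem uniformContinuousOn_iff_exists_pQuasiCauchyContinuous
    (E : Set ℝ) (hne : E.Nonempty) (hconv : Convex ℝ E) (f : ℝ → ℝ) :
    UniformContinuousOn f E ↔
      ∃ p : ℕ, 0 < p ∧ PQuasiCauchyContinuousOn p f E := by
  have := isPreconnected_iff_preconnectedSpace.1 hconv.isPreconnected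
  simpa only [uniformContinuousOn_iff_restrict, preservesQuasiCauchy_domRestrict_iff] using
    uniformContinuousOn_iff_exists_pQuasiCauchyContinuous_general
      (f := E.domRestrict f) isWellChained_of_preconnectedSpace
end
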